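/- Let X be a nonempty compact metric space, Λ a compact metric space, and w : Λ × X → X a weakly hyperbolic IFS. Then the Hutchinson–Barnsley operator F has a global attractor K ∈ K(X): there exists a nonempty compact set K ⊆ X with F(K) = K such that Fⁿ(B) → K in the Hausdorff metric for every nonempty compact set B ⊆ X. -/

import Mathlib

open Metric Set Filter Topology

/-- `seqComp w σ n = w_{σ₁} ∘ ⋯ ∘ w_{σₙ}` (with `σ i` denoting `σ_{i+1}`). -/
def seqComp {Λ X : Type*} (w : Λ → X → X) (σ : ℕ → Λ) : ℕ → X → X
  | 0 => id
  | n + 1 => seqComp w σ n ∘ w (σ n)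

/-- The Hutchinson–Barnsley operator on sets: `F(A) = w(Λ × A)`. -/
def HBset {Λ X : Type*} (w : Λ → X → X) (A : Set X) : Set X :=
  (fun p : Λ × X => w p.1 p.2) '' (Set.univ ×ˢ A)

theorem seqComp_congr {Λ X : Type*} (w : Λ → X → X) (σ τ : ℕ → Λ) (n : ℕ)
    (h : ∀ i < n, σ i = τ i) : seqComp w σ n = seqComp w τ n := by
  induction n with
  | zero => rfl
  | succ n ih =>
    simp only [seqComp]
    rw [ih (fun i hi => h i (by omega)), h n (by omega)]

theorem mem_HBset_iterate {Λ X : Type*} [Nonempty Λ] (w : Λ → X → X) (n : ℕ) (B : Set X) (x : X) :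
    x ∈ (HBset w)^[n] B ↔ ∃ σ : ℕ → Λ, ∃ b ∈ B, seqComp w σ n b = x := by
  induction n generalizing B with
  | zero =>
    simp [seqComp]
  | succ n ih =>
    rw [Function.iterate_succ_apply, ih]
    constructor
    · rintro ⟨σ, b, ⟨⟨l, y⟩, ⟨-, hy⟩, rfl⟩, rfl⟩
      refine ⟨Function.update σ n l, y, hy, ?_⟩
      simp only [seqComp, Function.comp, Function.update_self]
      rw [seqComp_congr w (Function.update σ n l) σ n]
      intro i hi
      exact Function.update_of_ne (by omega) _ _
    · rintro ⟨σ, b, hb, rfl⟩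
      exact ⟨σ, w (σ n) b, ⟨(σ n, b), ⟨mem_univ _, hb⟩, rfl⟩, rfl⟩

theorem HBset_mono {Λ X : Type*} (w : Λ → X → X) {A B : Set X} (h : A ⊆ B) :
    HBset w A ⊆ HBset w B :=
  image_mono (prod_mono le_rfl h)

theorem continuous_seqComp {Λ X : Type*} [TopologicalSpace Λ] [TopologicalSpace X]
    (w : Λ → X → X) (hw : Continuous fun p : Λ × X => w p.1 p.2) (n : ℕ) :
    Continuous fun p : (ℕ → Λ) × X => seqComp w p.1 n p.2 := by
  induction n with
  | zero => exact continuous_snd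
  | succ n ih =>
    have h1 : Continuous fun p : (ℕ → Λ) × X => w (p.1 n) p.2 :=
      hw.comp (f := fun p : (ℕ → Λ) × X => (p.1 n, p.2))
        (((continuous_apply n).comp continuous_fst).prodMk continuous_snd)
    exact ih.comp (continuous_fst.prodMk h1)

theorem seqComp_uniform {Λ X : Type*} [MetricSpace Λ] [CompactSpace Λ]
    [MetricSpace X] [CompactSpace X]
    (w : Λ → X → X) (hw : Continuous fun p : Λ × X => w p.1 p.2)
    (hyp : ∀ σ : ℕ → Λ,
      Tendsto (fun n => diam (Set.range (seqComp w σ n))) atTop (𝓝 0)) (ε : ℝ) (hε : 0 < ε) :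
    ∃ N, ∀ n ≥ N, ∀ σ x y, dist (seqComp w σ n x) (seqComp w σ n y) < ε := by
  let P : ℕ → Set ((ℕ → Λ) × (X × X)) := fun n =>
    {p | ε ≤ dist (seqComp w p.1 n p.2.1) (seqComp w p.1 n p.2.2)}
  let D : ℕ → Set (ℕ → Λ) := fun n => Prod.fst '' P n
  have hPc : ∀ n, IsCompact (P n) := fun n => by
    refine IsClosed.isCompact (isClosed_le continuous_const ?_)
    have h := continuous_seqComp w hw n
    exact (h.comp (continuous_fst.prodMk (continuous_fst.comp continuous_snd))).dist
      (h.comp (continuous_fst.prodMk (continuous_snd.comp continuous_snd)))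
  have hDc : ∀ n, IsCompact (D n) := fun n => (hPc n).image continuous_fst
  have hDs : ∀ n, D (n + 1) ⊆ D n := by
    rintro n _ ⟨⟨σ, x, y⟩, h, rfl⟩
    exact ⟨(σ, w (σ n) x, w (σ n) y), h, rfl⟩
  have hanti : Antitone D := antitone_nat_of_succ_le hDs
  by_cases hne : ∀ n, (D n).Nonempty
  · exfalso
    obtain ⟨σ, hσ⟩ := IsCompact.nonempty_iInter_of_sequence_nonempty_isCompact_isClosed D hDs hne
      (hDc 0) (fun n => (hDc n).isClosed)
    obtain ⟨n, hn⟩ := ((hyp σ).eventually (gt_mem_nhds hε)).exists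
    obtain ⟨⟨σ', x, y⟩, h, rfl⟩ := mem_iInter.1 hσ n
    have h2 := dist_le_diam_of_mem (s := Set.range (seqComp w σ' n))
      (isCompact_univ.isBounded.subset (subset_univ _)) (mem_range_self x) (mem_range_self y)
    exact absurd (lt_of_le_of_lt h2 hn) (not_lt.2 h)
  · push Not at hne
    obtain ⟨N, hN⟩ := hne
    refine ⟨N, fun n hn σ x y => ?_⟩
    by_contra hcon
    have : σ ∈ D N := hanti hn ⟨(σ, x, y), not_lt.1 hcon, rfl⟩
    rw [hN] at this
    exact this

/-- A weakly hyperbolic IFS on a nonempty compact metric space has a global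
attractor which is a compact invariant set. -/
theorem stmt_4 {Λ X : Type*} [MetricSpace Λ] [CompactSpace Λ] [Nonempty Λ]
    [MetricSpace X] [CompactSpace X] [Nonempty X]
    (w : Λ → X → X) (hw : Continuous fun p : Λ × X => w p.1 p.2)
    (hyp : ∀ σ : ℕ → Λ,
      Tendsto (fun n => diam (Set.range (seqComp w σ n))) atTop (𝓝 0)) :
    ∃ K : Set X, K.Nonempty ∧ IsCompact K ∧ HBset w K = K ∧
      ∀ B : Set X, B.Nonempty → IsCompact B →
        Tendsto (fun n => hausdorffDist ((HBset w)^[n] B) K) atTop (𝓝 0) := by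
  have hFc : ∀ A : Set X, IsCompact A → IsCompact (HBset w A) := fun A hA =>
    (isCompact_univ.prod hA).image hw
  let G : ℕ → Set X := fun n => (HBset w)^[n] univ
  have hGs' : ∀ n, G (n + 1) = HBset w (G n) := fun n => Function.iterate_succ_apply' _ _ _
  have hGc : ∀ n, IsCompact (G n) := by
    intro n
    induction n with
    | zero => exact isCompact_univ
    | succ n ih => rw [hGs']; exact hFc _ ih
  have hGs : ∀ n, G (n + 1) ⊆ G n := by
    intro n
    induction n with
    | zero => exact subset_univ _
    | succ n ih => rw [hGs' n, hGs' (n + 1)]; exact HBset_mono w ih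
  have hGn : ∀ n, (G n).Nonempty := fun n =>
    ⟨_, (mem_HBset_iterate w n univ _).2
      ⟨fun _ => Classical.arbitrary Λ, Classical.arbitrary X, mem_univ _, rfl⟩⟩
  have hKn : (⋂ n, G n).Nonempty :=
    IsCompact.nonempty_iInter_of_sequence_nonempty_isCompact_isClosed G hGs hGn
      (hGc 0) (fun n => (hGc n).isClosed)
  have hKinv : HBset w (⋂ n, G n) = ⋂ n, G n := by
    apply Subset.antisymm
    · refine subset_iInter fun n => ?_
      refine Subset.trans ?_ (hGs n)
      rw [hGs']
      exact HBset_mono w (iInter_subset _ n)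
    · intro x hx
      let S : ℕ → Set (Λ × X) := fun n => {p | w p.1 p.2 = x} ∩ (univ ×ˢ G n)
      have hcl : ∀ n, IsClosed (S n) := fun n =>
        (isClosed_eq hw continuous_const).inter (isClosed_univ.prod (hGc n).isClosed)
      obtain ⟨p, hp⟩ := IsCompact.nonempty_iInter_of_sequence_nonempty_isCompact_isClosed S
        (fun n => inter_subset_inter_right _ (prod_mono le_rfl (hGs n)))
        (fun n => by
          have h := mem_iInter.1 hx (n + 1)
          rw [hGs'] at h
          obtain ⟨p, hp, hpx⟩ := h
          exact ⟨p, hpx, hp⟩)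
        (hcl 0).isCompact hcl
      rw [mem_iInter] at hp
      exact ⟨p, ⟨mem_univ _, mem_iInter.2 fun n => (hp n).2.2⟩, (hp 0).1⟩
  refine ⟨⋂ n, G n, hKn, (isClosed_iInter fun n => (hGc n).isClosed).isCompact, hKinv, ?_⟩
  intro B hB _
  rw [Metric.tendsto_atTop]
  intro ε hε
  obtain ⟨N, hN⟩ := seqComp_uniform w hw hyp (ε / 2) (by positivity)
  refine ⟨N, fun n hn => ?_⟩
  have hKit : (HBset w)^[n] (⋂ n, G n) = ⋂ n, G n := Function.iterate_fixed hKinv n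
  rw [Real.dist_eq, sub_zero, abs_of_nonneg hausdorffDist_nonneg]
  refine lt_of_le_of_lt ?_ (half_lt_self hε)
  obtain ⟨b, hb⟩ := hB
  obtain ⟨k, hk⟩ := hKn
  apply hausdorffDist_le_of_mem_dist (by positivity)
  · intro x hx
    obtain ⟨σ, c, hc, rfl⟩ := (mem_HBset_iterate w n B x).1 hx
    refine ⟨seqComp w σ n k, ?_, (hN n hn σ c k).le⟩
    rw [← hKit]
    exact (mem_HBset_iterate w n _ _).2 ⟨σ, k, hk, rfl⟩
  · intro x hx
    rw [← hKit] at hx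
    obtain ⟨σ, c, hc, rfl⟩ := (mem_HBset_iterate w n _ x).1 hx
    exact ⟨seqComp w σ n b, (mem_HBset_iterate w n _ _).2 ⟨σ, b, hb, rfl⟩, (hN n hn σ c b).le⟩
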